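/- Let x_1,…,x_N ∈ ℝ^n and C = Σ_{k=1}^N x_k x_k^T, and suppose C = Q Λ Q^T where Q ∈ ℝ^{n×m} satisfies Q^T Q = I_m and Λ ∈ ℝ^{m×m} is an invertible diagonal matrix (so each x_k lies in the column space of Q). Fix indices k and i, let e_i denote the i-th standard basis vector of ℝ^n, and set E = e_i x_k^T + x_k e_i^T, which is the derivative of the perturbed covariance Σ_j (x_j + ε_j)(x_j + ε_j)^T with respect to the i-th coordinate of ε_k at ε = 0. Suppose t ↦ (Q(t), Λ(t)) is defined on a neighborhood of 0, is differentiable at 0, and satisfies Q(0) = Q, Λ(0) = Λ, and (C + tE) Q(t) = Q(t) Λ(t) for all t. Then (I_n − Q Q^T) Q'(0) = (I_n − Q Q^T) (e_i x_k^T) Q Λ^{-1}. -/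

import Mathlib

open Matrix

/-- Entrywise product rule for matrix-valued curves. -/
theorem hasDerivAt_matrix_mul_apply {l m n : Type*} [Fintype m]
    {A : ℝ → Matrix l m ℝ} {B : ℝ → Matrix m n ℝ} {A' : Matrix l m ℝ} {B' : Matrix m n ℝ} {t : ℝ}
    (hA : ∀ a b, HasDerivAt (fun s => A s a b) (A' a b) t)
    (hB : ∀ a b, HasDerivAt (fun s => B s a b) (B' a b) t) (a : l) (b : n) :
    HasDerivAt (fun s => (A s * B s) a b) ((A' * B t + A t * B') a b) t := by
  simp only [Matrix.add_apply, Matrix.mul_apply, ← Finset.sum_add_distrib]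
  exact HasDerivAt.fun_sum fun j _ => (hA a j).mul (hB j b)

/-- A matrix annihilating a sum of rank-one matrices `x xᵀ` annihilates each vector `x`. -/
theorem mulVec_eq_zero_of_mul_sum_vecMulVec_eq_zero {l n ι : Type*} [Fintype n] [Fintype ι]
    (P : Matrix l n ℝ) (x : ι → n → ℝ) (h : P * ∑ j, vecMulVec (x j) (x j) = 0) (k : ι) :
    P *ᵥ x k = 0 := by
  ext a
  have hsum : ∑ j, (P *ᵥ x j) a * (P *ᵥ x j) a = 0 := by
    have h' : (P * (∑ j, vecMulVec (x j) (x j)) * Pᵀ) a a = 0 := by simp [h]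
    rw [Matrix.mul_sum, Matrix.sum_mul, Matrix.sum_apply] at h'
    simpa [Matrix.mul_vecMulVec, Matrix.vecMulVec_mul, Matrix.vecMul_transpose,
      Matrix.vecMulVec_apply] using h'
  have := (Finset.sum_eq_zero_iff_of_nonneg fun j _ => mul_self_nonneg _).1 hsum k
    (Finset.mem_univ k)
  simpa using this

/-- Proposition 2 of the paper (Eq. 9): with `C = Σ x_k x_kᵀ = Q Λ Qᵀ`
(`Qᵀ Q = 1`, `Λ = diagonal d` invertible), fixed indices `k, i`, and
`E = e_i x_kᵀ + x_k e_iᵀ` (the derivative of the perturbed covariance with respect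
to the `i`-th coordinate of `ε_k` at `ε = 0`), any family `t ↦ (Q(t), Λ(t))`,
differentiable at `0` with `Q(0) = Q`, `Λ(0) = Λ`, and
`(C + t E) Q(t) = Q(t) Λ(t)` near `0`, satisfies
`(I − Q Qᵀ) Q'(0) = (I − Q Qᵀ) (e_i x_kᵀ) Q Λ⁻¹`. -/
theorem stmt_7 (n m N : ℕ)
    (x : Fin N → Fin n → ℝ)
    (C : Matrix (Fin n) (Fin n) ℝ) (hC : C = ∑ k, vecMulVec (x k) (x k))
    (Q : Matrix (Fin n) (Fin m) ℝ) (hQ : Qᵀ * Q = 1)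
    (d : Fin m → ℝ) (hd : ∀ i, d i ≠ 0)
    (hCQ : C = Q * Matrix.diagonal d * Qᵀ)
    (k : Fin N) (i : Fin n)
    (E : Matrix (Fin n) (Fin n) ℝ)
    (hE : E = vecMulVec (Pi.single i 1) (x k) + vecMulVec (x k) (Pi.single i 1))
    (Qf : ℝ → Matrix (Fin n) (Fin m) ℝ) (Lf : ℝ → Matrix (Fin m) (Fin m) ℝ)
    (Q' : Matrix (Fin n) (Fin m) ℝ) (L' : Matrix (Fin m) (Fin m) ℝ)
    (hQf0 : Qf 0 = Q) (hLf0 : Lf 0 = Matrix.diagonal d)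
    (hQdiff : ∀ a b, HasDerivAt (fun t => Qf t a b) (Q' a b) 0)
    (hLdiff : ∀ a b, HasDerivAt (fun t => Lf t a b) (L' a b) 0)
    (heig : ∀ᶠ t in nhds (0 : ℝ), (C + t • E) * Qf t = Qf t * Lf t) :
    (1 - Q * Qᵀ) * Q' =
      (1 - Q * Qᵀ) * vecMulVec (Pi.single i 1) (x k) * Q * (Matrix.diagonal d)⁻¹ := by
  have hPQ : (1 - Q * Qᵀ) * Q = 0 := by
    rw [Matrix.sub_mul, Matrix.mul_assoc, hQ, Matrix.one_mul, Matrix.mul_one, sub_self]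
  have hPC : (1 - Q * Qᵀ) * C = 0 := by
    rw [hCQ, ← Matrix.mul_assoc, ← Matrix.mul_assoc, hPQ, Matrix.zero_mul, Matrix.zero_mul]
  have hPx : (1 - Q * Qᵀ) *ᵥ x k = 0 :=
    mulVec_eq_zero_of_mul_sum_vecMulVec_eq_zero _ x (hC ▸ hPC) k
  have hCE : ∀ a b, HasDerivAt (fun t : ℝ => (C + t • E) a b) (E a b) 0 := fun a b => by
    simpa using ((hasDerivAt_id (0 : ℝ)).mul_const (E a b)).const_add (C a b)
  have hderiv : E * Q + C * Q' = Q' * Matrix.diagonal d + Q * L' := by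
    ext a b
    have hl := hasDerivAt_matrix_mul_apply hCE hQdiff a b
    have hr := hasDerivAt_matrix_mul_apply hQdiff hLdiff a b
    rw [hQf0, zero_smul, add_zero] at hl
    rw [hQf0, hLf0] at hr
    exact hl.unique (hr.congr_of_eventuallyEq (heig.mono fun t ht => congrFun₂ ht a b))
  have hproj : (1 - Q * Qᵀ) * vecMulVec (Pi.single i 1) (x k) * Q =
      (1 - Q * Qᵀ) * Q' * Matrix.diagonal d := by
    have h := congrArg (fun M => (1 - Q * Qᵀ) * M) hderiv
    simp only [Matrix.mul_add, ← Matrix.mul_assoc, hPC, hPQ, Matrix.zero_mul, add_zero] at h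
    rw [← h, hE, Matrix.mul_add, Matrix.mul_vecMulVec _ (x k), hPx, Matrix.zero_vecMulVec,
      add_zero]
  have hdet : IsUnit (Matrix.diagonal d).det := by
    rw [Matrix.det_diagonal]
    exact (Finset.prod_ne_zero_iff.2 fun j _ => hd j).isUnit
  rw [hproj, Matrix.mul_nonsing_inv_cancel_right _ _ hdet]
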